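/- For every natural number n and every real x, the n-th Euler polynomial satisfies E_n(x) = ∫_{ℝ} (x + i t − 1/2)^n · sech(π t) dt, where the integral is a convergent complex-valued integral over the real line. -/

import Mathlib

open MeasureTheory

/-- The hyperbolic secant function: `sech t = 2 / (eᵗ + e⁻ᵗ)`. -/
noncomputable def sech (x : ℝ) : ℝ := 1 / Real.cosh x

/-- The `n`-th Bernoulli polynomial evaluated at a real `x`. -/
noncomputable def bernoulliPoly (n : ℕ) (x : ℝ) : ℝ :=
  Polynomial.aeval x (Polynomial.bernoulli n)

/-- The `n`-th Euler polynomial evaluated at a real `x`, via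
`Eₙ(x) = (2^{n+1}/(n+1)) (B_{n+1}((x+1)/2) − B_{n+1}(x/2))` (generating function
`Σ Eₙ(x) tⁿ/n! = 2e^{xt}/(eᵗ + 1)`). -/
noncomputable def eulerPoly (n : ℕ) (x : ℝ) : ℝ :=
  (2 : ℝ) ^ (n + 1) / (n + 1) *
    (bernoulliPoly (n + 1) ((x + 1) / 2) - bernoulliPoly (n + 1) (x / 2))

/-!
If `f` is holomorphic on the strip `|re z| ≤ 1/2` and `f z = O(exp (k |im z|))` with `k < π`, then
`(f z - f 0) / sin (π z)` is holomorphic there and tends to `0` at both ends of the strip, so by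
Cauchy's theorem its integrals along the two edges coincide. On the edges `re z = ±1/2` the sine is
`± cosh (π t)`, and since `∫ sech (π t) dt = 1` this says
`∫ (f (1/2 + it) + f (-1/2 + it)) sech (π t) dt = 2 f 0`.
For `f z = Eₙ(x + z)` the functional equation `Eₙ(y + 1) + Eₙ(y) = 2 yⁿ`, read at
`y = x + it - 1/2`, turns the left-hand side into twice the moment integral.
-/

open Filter Asymptotics Set
open Complex (I)
open scoped Real Topology Polynomial

section Sech

theorem sech_pos (t : ℝ) : 0 < sech t :=
  one_div_pos.2 (Real.cosh_pos t)

@[fun_prop]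
theorem continuous_sech : Continuous sech :=
  continuous_const.div Real.continuous_cosh fun t => (Real.cosh_pos t).ne'

theorem sech_le_two_mul_exp_neg_abs (t : ℝ) : sech t ≤ 2 * Real.exp (-|t|) := by
  have h_cosh : Real.exp |t| ≤ 2 * Real.cosh t := by
    rw [← Real.cosh_abs, Real.cosh_eq]
    linarith [Real.exp_pos (-|t|)]
  rw [sech, Real.exp_neg, ← div_eq_mul_inv, div_le_div_iff₀ (Real.cosh_pos t) (Real.exp_pos _)]
  linarith

theorem integrable_exp_neg_mul_abs {c : ℝ} (hc : 0 < c) :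
    Integrable fun t : ℝ => Real.exp (-c * |t|) := by
  have h_cont : Continuous fun t : ℝ => Real.exp (-c * |t|) := by fun_prop
  refine h_cont.locallyIntegrable.integrable_of_isBigO_atTop_of_norm_isNegInvariant
    (g := fun t => Real.exp (-c * t)) (ae_of_all _ fun t => by simp) ?_
    ⟨Ioi 0, Ioi_mem_atTop 0, exp_neg_integrableOn_Ioi 0 hc⟩
  refine EventuallyEq.isBigO ?_
  filter_upwards [eventually_ge_atTop 0] with t ht
  rw [abs_of_nonneg ht]

theorem integrable_sech_mul_smul {E : Type*} [NormedAddCommGroup E] [NormedSpace ℝ E]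
    {f : ℝ → E} {b c : ℝ} (hbc : b < |c|) (hf : Continuous f)
    (hO : f =O[cocompact ℝ] fun t => Real.exp (b * |t|)) :
    Integrable fun t => sech (c * t) • f t := by
  have h_sech : (fun t => sech (c * t)) =O[cocompact ℝ] fun t => Real.exp (-|c| * |t|) :=
    .of_bound 2 <| .of_forall fun t => by
      rw [Real.norm_of_nonneg (sech_pos _).le, Real.norm_of_nonneg (Real.exp_pos _).le, neg_mul,
        ← abs_mul]
      exact sech_le_two_mul_exp_neg_abs _
  have h_cont : Continuous fun t => sech (c * t) • f t := by fun_prop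
  refine h_cont.locallyIntegrable.integrable_of_isBigO_cocompact
    (g := fun t => Real.exp (-(|c| - b) * |t|)) ?_
    ((integrable_exp_neg_mul_abs (sub_pos.2 hbc)).integrableAtFilter _)
  refine (h_sech.smul hO).congr_right fun t => ?_
  rw [smul_eq_mul, ← Real.exp_add]
  ring_nf

theorem integrable_sech : Integrable sech := by
  simpa using integrable_sech_mul_smul (f := fun _ => (1 : ℝ)) (b := 0) (c := 1) (by simp)
    continuous_const (by simpa using isBigO_refl (fun _ => (1 : ℝ)) _)

theorem hasDerivAt_arctan_sinh (t : ℝ) :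
    HasDerivAt (fun t => Real.arctan (Real.sinh t)) (sech t) t := by
  refine (Real.hasDerivAt_sinh t).arctan.congr_deriv ?_
  rw [sech, add_comm 1, ← Real.cosh_sq]
  field_simp [(Real.cosh_pos t).ne']

theorem integral_sech : ∫ t, sech t = π := by
  have h_bot : Tendsto (fun t => Real.arctan (Real.sinh t)) atBot (𝓝 (-(π / 2))) :=
    (Real.tendsto_arctan_atBot.mono_right nhdsWithin_le_nhds).comp
      Real.sinhOrderIso.tendsto_atBot
  have h_top : Tendsto (fun t => Real.arctan (Real.sinh t)) atTop (𝓝 (π / 2)) :=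
    (Real.tendsto_arctan_atTop.mono_right nhdsWithin_le_nhds).comp
      Real.sinhOrderIso.tendsto_atTop
  rw [integral_of_hasDerivAt_of_tendsto hasDerivAt_arctan_sinh integrable_sech h_bot h_top]
  ring

theorem integrable_sech_pi_mul : Integrable fun t : ℝ => sech (π * t) :=
  integrable_sech.comp_mul_left' Real.pi_ne_zero

theorem integral_sech_pi_mul : ∫ t : ℝ, sech (π * t) = 1 := by
  rw [Measure.integral_comp_mul_left sech π, integral_sech, smul_eq_mul,
    abs_of_pos (inv_pos.2 Real.pi_pos), inv_mul_cancel₀ Real.pi_ne_zero]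

end Sech

section Strip

/-- The filter of approach to the two ends `± i∞` of the closed vertical strip
`a ≤ re z ≤ b`, along which growth and decay of functions on the strip are measured. -/
def stripEnds (a b : ℝ) : Filter ℂ :=
  comap (fun z => |z.im|) atTop ⊓ 𝓟 (Complex.re ⁻¹' Icc a b)

variable {a b : ℝ}

theorem tendsto_abs_im_stripEnds : Tendsto (fun z : ℂ => |z.im|) (stripEnds a b) atTop :=
  tendsto_comap.mono_left inf_le_left

theorem eventually_forall_of_eventually_stripEnds {p : ℂ → Prop} (h : ∀ᶠ z in stripEnds a b, p z) :
    ∀ᶠ T : ℝ in cocompact ℝ, ∀ s ∈ Icc a b, p (s + T * I) := by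
  rw [stripEnds, eventually_inf_principal, eventually_comap] at h
  filter_upwards [(tendsto_norm_cocompact_atTop (E := ℝ)).eventually h] with T hT s hs
  exact hT _ (by simp) (by simpa using hs)

theorem tendsto_add_mul_I_stripEnds {s : ℝ} (hs : s ∈ Icc a b) :
    Tendsto (fun t : ℝ => (s + t * I : ℂ)) (cocompact ℝ) (stripEnds a b) := fun _ hp =>
  (eventually_forall_of_eventually_stripEnds hp).mono fun _ hT => hT s hs

theorem tendsto_integral_horizontal_of_tendsto_stripEnds {E : Type*} [NormedAddCommGroup E]
    [NormedSpace ℝ E] {f : ℂ → E} (hab : a ≤ b) (hf : Tendsto f (stripEnds a b) (𝓝 0)) :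
    Tendsto (fun T : ℝ => ∫ s in a..b, f (s + T * I)) (cocompact ℝ) (𝓝 0) := by
  rw [Metric.tendsto_nhds]
  intro ε hε
  have h_len : 0 < |b - a| + 1 := by positivity
  have h_small : ∀ᶠ z in stripEnds a b, ‖f z‖ < ε / (|b - a| + 1) := by
    simpa using hf.norm.eventually_lt_const (by simpa using div_pos hε h_len)
  filter_upwards [eventually_forall_of_eventually_stripEnds h_small] with T hT
  rw [dist_zero_right]
  calc ‖∫ s in a..b, f (s + T * I)‖
      ≤ ε / (|b - a| + 1) * |b - a| :=
        intervalIntegral.norm_integral_le_of_norm_le_const fun s hs =>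
          (hT s (Ioc_subset_Icc_self (uIoc_of_le hab ▸ hs))).le
    _ < ε / (|b - a| + 1) * (|b - a| + 1) := by gcongr; linarith
    _ = ε := div_mul_cancel₀ ε h_len.ne'

variable {E : Type*} [NormedAddCommGroup E] [NormedSpace ℂ E] {f : ℂ → E}

theorem continuousOn_closedStrip_of_diffContOnCl (hab : a < b)
    (hf : DiffContOnCl ℂ f (Complex.re ⁻¹' Ioo a b)) :
    ContinuousOn f (Complex.re ⁻¹' Icc a b) := by
  simpa only [Complex.closure_preimage_re, closure_Ioo hab.ne] using hf.continuousOn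

theorem I_smul_integral_vertical_sub_eq (hab : a < b)
    (hf : DiffContOnCl ℂ f (Complex.re ⁻¹' Ioo a b)) (T : ℝ) :
    I • ((∫ t in (-T)..T, f (b + t * I)) - ∫ t in (-T)..T, f (a + t * I)) =
      (∫ s in a..b, f (s + T * I)) - ∫ s in a..b, f (s + (-T : ℝ) * I) := by
  have h_rect := Complex.integral_boundary_rect_eq_zero_of_continuousOn_of_differentiableOn f
    ⟨a, -T⟩ ⟨b, T⟩
    ((continuousOn_closedStrip_of_diffContOnCl hab hf).mono fun z hz => by
      simpa [uIcc_of_le hab.le] using hz.1)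
    (hf.differentiableOn.mono fun z hz => by simpa [hab.le] using hz.1)
  rw [smul_sub, ← sub_eq_zero, ← h_rect]
  abel

theorem integral_vertical_eq_of_tendsto_stripEnds [CompleteSpace E] (hab : a < b)
    (hf : DiffContOnCl ℂ f (Complex.re ⁻¹' Ioo a b)) (h_zero : Tendsto f (stripEnds a b) (𝓝 0))
    (ha : Integrable fun t : ℝ => f (a + t * I)) (hb : Integrable fun t : ℝ => f (b + t * I)) :
    ∫ t : ℝ, f (a + t * I) = ∫ t : ℝ, f (b + t * I) := by
  have h_horizontal := tendsto_integral_horizontal_of_tendsto_stripEnds hab.le h_zero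
  rw [cocompact_eq_atBot_atTop, tendsto_sup] at h_horizontal
  have h_vertical := ((intervalIntegral_tendsto_integral hb tendsto_neg_atTop_atBot tendsto_id).sub
    (intervalIntegral_tendsto_integral ha tendsto_neg_atTop_atBot tendsto_id)).const_smul I
  simp only [id, I_smul_integral_vertical_sub_eq hab hf] at h_vertical
  have h_limit := tendsto_nhds_unique h_vertical
    (h_horizontal.2.sub (h_horizontal.1.comp tendsto_neg_atTop_atBot))
  rw [sub_zero, smul_eq_zero_iff_right Complex.I_ne_zero, sub_eq_zero] at h_limit
  exact h_limit.symm

end Strip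

section Sine

theorem sinh_abs_im_le_norm_sin (z : ℂ) : Real.sinh |z.im| ≤ ‖Complex.sin z‖ := by
  have h_norm : ‖Complex.sin z‖ = ‖Complex.exp (-z * I) - Complex.exp (z * I)‖ / 2 := by
    simp [Complex.sin]
  have h_exp := abs_norm_sub_norm_le (Complex.exp (-z * I)) (Complex.exp (z * I))
  simp only [Complex.norm_exp, Complex.mul_I_re, Complex.neg_im, neg_neg] at h_exp
  rw [h_norm, ← Real.abs_sinh, Real.sinh_eq, abs_div, abs_two]
  gcongr

theorem exp_le_four_mul_sinh {y : ℝ} (hy : 1 ≤ y) : Real.exp y ≤ 4 * Real.sinh y := by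
  have h_neg : Real.exp (-y) ≤ 1 := Real.exp_le_one_iff.2 (by linarith)
  rw [Real.sinh_eq]
  linarith [Real.add_one_le_exp y]

theorem isBigO_inv_sin :
    (fun z => (Complex.sin z)⁻¹) =O[comap (fun z => |z.im|) atTop]
      fun z => Real.exp (-|z.im|) := by
  refine .of_bound 4 ?_
  filter_upwards [tendsto_comap.eventually (eventually_ge_atTop 1)] with z hz
  have h_sin : Real.exp |z.im| ≤ 4 * ‖Complex.sin z‖ :=
    (exp_le_four_mul_sinh hz).trans (by gcongr; exact sinh_abs_im_le_norm_sin z)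
  have h_pos : 0 < ‖Complex.sin z‖ := by linarith [Real.exp_pos |z.im|]
  rw [norm_inv, Real.norm_of_nonneg (Real.exp_pos _).le, Real.exp_neg, ← div_eq_mul_inv,
    inv_eq_one_div, div_le_div_iff₀ h_pos (Real.exp_pos _), one_mul]
  exact h_sin

theorem tendsto_inv_sin_mul_smul {E : Type*} [NormedAddCommGroup E] [NormedSpace ℂ E]
    {f : ℂ → E} {a b k c : ℝ} (hc : 0 < c) (hkc : k < c)
    (hO : f =O[stripEnds a b] fun z => Real.exp (k * |z.im|)) :
    Tendsto (fun z => (Complex.sin (c * z))⁻¹ • f z) (stripEnds a b) (𝓝 0) := by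
  have h_scale : Tendsto (fun z : ℂ => c * z) (stripEnds a b) (comap (fun z => |z.im|) atTop) := by
    rw [tendsto_comap_iff]
    refine (tendsto_abs_im_stripEnds.const_mul_atTop hc).congr fun z => ?_
    simp [abs_mul, abs_of_pos hc]
  have h_decay : Tendsto (fun z : ℂ => Real.exp (-(c - k) * |z.im|)) (stripEnds a b) (𝓝 0) :=
    Real.tendsto_exp_atBot.comp (tendsto_abs_im_stripEnds.const_mul_atTop_of_neg (by linarith))
  refine (((isBigO_inv_sin.comp_tendsto h_scale).smul hO).congr_right fun z => ?_).trans_tendsto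
    h_decay
  simp only [Function.comp, Complex.im_ofReal_mul, abs_mul, abs_of_pos hc, smul_eq_mul,
    ← Real.exp_add]
  ring_nf

theorem dslope_sin_pi_mul_zero_ne_zero {z : ℂ} (hz : |z.re| < 1) :
    dslope (fun w => Complex.sin (π * w)) 0 z ≠ 0 := by
  rcases eq_or_ne z 0 with rfl | h_ne
  · have h_deriv : HasDerivAt (fun w : ℂ => Complex.sin (π * w)) π 0 := by
      simpa using ((hasDerivAt_id (0 : ℂ)).const_mul (π : ℂ)).csin
    rw [dslope_same, h_deriv.deriv]
    exact Complex.ofReal_ne_zero.2 Real.pi_ne_zero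
  · intro h
    rw [dslope_of_ne _ h_ne, slope_def_field, mul_zero, Complex.sin_zero, sub_zero, sub_zero,
      div_eq_zero_iff, or_iff_left h_ne, Complex.sin_eq_zero_iff] at h
    obtain ⟨k, hk⟩ := h
    obtain rfl : z = k := mul_left_cancel₀ (Complex.ofReal_ne_zero.2 Real.pi_ne_zero)
      (hk.trans (mul_comm _ _))
    have h_abs : |k| < 1 := by exact_mod_cast hz
    simp [Int.abs_lt_one_iff.1 h_abs] at h_ne

theorem sin_pi_mul_half_add_mul_I (t : ℝ) :
    Complex.sin (π * ((1 / 2 : ℝ) + t * I)) = Real.cosh (π * t) := by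
  rw [show (π * ((1 / 2 : ℝ) + t * I) : ℂ) = (π * t : ℝ) * I + π / 2 by push_cast; ring,
    Complex.sin_add_pi_div_two, Complex.cos_mul_I, Complex.ofReal_cosh]

theorem sin_pi_mul_neg_half_add_mul_I (t : ℝ) :
    Complex.sin (π * ((-1 / 2 : ℝ) + t * I)) = -Real.cosh (π * t) := by
  rw [show (π * ((-1 / 2 : ℝ) + t * I) : ℂ) = (π * t : ℝ) * I - π / 2 by push_cast; ring,
    Complex.sin_sub_pi_div_two, Complex.cos_mul_I, Complex.ofReal_cosh]

end Sine

section MeanValue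

variable {E : Type*} [NormedAddCommGroup E] [NormedSpace ℂ E] {f : ℂ → E}

/-- The quotient `(f z - f 0) / sin (π z)`, with its singularity at `0` removed: it is written as
a ratio of difference quotients, both of which `dslope` extends to `0` by the derivative. -/
noncomputable def sinQuotient (f : ℂ → E) (z : ℂ) : E :=
  (dslope (fun w => Complex.sin (π * w)) 0 z)⁻¹ • dslope f 0 z

theorem sinQuotient_of_ne {z : ℂ} (hz : z ≠ 0) :
    sinQuotient f z = (Complex.sin (π * z))⁻¹ • (f z - f 0) := by
  rw [sinQuotient, dslope_of_ne _ hz, dslope_of_ne _ hz, slope_def_field, slope, vsub_eq_sub,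
    sub_zero, mul_zero, Complex.sin_zero, sub_zero, smul_smul, inv_div, div_mul_eq_mul_div,
    mul_inv_cancel₀ hz, one_div]

theorem diffContOnCl_sinQuotient [CompleteSpace E]
    (hf : DiffContOnCl ℂ f (Complex.re ⁻¹' Ioo (-1 / 2) (1 / 2))) :
    DiffContOnCl ℂ (sinQuotient f) (Complex.re ⁻¹' Ioo (-1 / 2) (1 / 2)) := by
  have h_nhds : Complex.re ⁻¹' Ioo (-1 / 2) (1 / 2) ∈ 𝓝 (0 : ℂ) :=
    (isOpen_Ioo.preimage Complex.continuous_re).mem_nhds (by norm_num)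
  have h_slope : DiffContOnCl ℂ (dslope f 0) (Complex.re ⁻¹' Ioo (-1 / 2) (1 / 2)) :=
    ⟨(Complex.differentiableOn_dslope h_nhds).2 hf.differentiableOn,
      (continuousOn_dslope (mem_of_superset h_nhds subset_closure)).2
        ⟨hf.continuousOn, hf.differentiableOn.differentiableAt h_nhds⟩⟩
  have h_sin : Differentiable ℂ (dslope (fun w => Complex.sin (π * w)) 0) := by
    rw [← differentiableOn_univ, Complex.differentiableOn_dslope univ_mem]
    fun_prop
  refine (h_sin.diffContOnCl.inv fun z hz => dslope_sin_pi_mul_zero_ne_zero ?_).smul h_slope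
  rw [Complex.closure_preimage_re, closure_Ioo (by norm_num)] at hz
  exact abs_lt.2 ⟨by linarith [hz.1], by linarith [hz.2]⟩

theorem tendsto_sinQuotient_stripEnds {a b k : ℝ} (hk : k < π)
    (hO : f =O[stripEnds a b] fun z => Real.exp (k * |z.im|)) :
    Tendsto (sinQuotient f) (stripEnds a b) (𝓝 0) := by
  have h_const : (fun _ : ℂ => f 0) =O[stripEnds a b] fun z => Real.exp (0 * |z.im|) := by
    simpa using isBigO_const_const (f 0) (one_ne_zero (α := ℝ)) _
  have h_diff := (tendsto_inv_sin_mul_smul Real.pi_pos hk hO).sub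
    (tendsto_inv_sin_mul_smul Real.pi_pos Real.pi_pos h_const)
  have h_ne : ∀ᶠ z in stripEnds a b, z ≠ 0 := by
    filter_upwards [tendsto_abs_im_stripEnds.eventually_ne_atTop 0] with z hz
    rintro rfl
    simp at hz
  rw [sub_zero] at h_diff
  refine h_diff.congr' ?_
  filter_upwards [h_ne] with z hz
  rw [sinQuotient_of_ne hz, smul_sub]

theorem sinQuotient_half_add_mul_I (t : ℝ) :
    sinQuotient f ((1 / 2 : ℝ) + t * I) = sech (π * t) • (f ((1 / 2 : ℝ) + t * I) - f 0) := by
  have h_ne : ((1 / 2 : ℝ) + t * I : ℂ) ≠ 0 := fun h => by simpa using congrArg Complex.re h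
  rw [sinQuotient_of_ne h_ne, sin_pi_mul_half_add_mul_I, sech, one_div (Real.cosh _),
    ← Complex.ofReal_inv, Complex.coe_smul]

theorem sinQuotient_neg_half_add_mul_I (t : ℝ) :
    sinQuotient f ((-1 / 2 : ℝ) + t * I) =
      -(sech (π * t) • (f ((-1 / 2 : ℝ) + t * I) - f 0)) := by
  have h_ne : ((-1 / 2 : ℝ) + t * I : ℂ) ≠ 0 := fun h => by simpa using congrArg Complex.re h
  rw [sinQuotient_of_ne h_ne, sin_pi_mul_neg_half_add_mul_I, sech, one_div (Real.cosh _),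
    inv_neg, neg_smul, ← Complex.ofReal_inv, Complex.coe_smul]

theorem integrable_sech_pi_mul_smul_vertical {a b k s : ℝ} (hab : a < b) (hs : s ∈ Icc a b)
    (hf : DiffContOnCl ℂ f (Complex.re ⁻¹' Ioo a b)) (hk : k < π)
    (hO : f =O[stripEnds a b] fun z => Real.exp (k * |z.im|)) :
    Integrable fun t : ℝ => sech (π * t) • f (s + t * I) := by
  refine integrable_sech_mul_smul (hk.trans_le (le_abs_self π)) ?_ ?_
  · exact (continuousOn_closedStrip_of_diffContOnCl hab hf).comp_continuous (by fun_prop)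
      fun t => by simpa using hs
  · simpa [Function.comp_def] using hO.comp_tendsto (tendsto_add_mul_I_stripEnds hs)

theorem integral_sech_pi_mul_smul_sub [CompleteSpace E] {g : ℝ → E} (v : E)
    (hg : Integrable fun t => sech (π * t) • g t) :
    ∫ t, sech (π * t) • (g t - v) = (∫ t, sech (π * t) • g t) - v := by
  simp only [smul_sub]
  rw [integral_sub hg (integrable_sech_pi_mul.smul_const v), integral_smul_const,
    integral_sech_pi_mul, one_smul]

/-- Mean value property of the strip: `sech (π t) dt / 2` on each of the two edges is its harmonic
measure seen from `0`. -/
theorem integral_sech_pi_mul_smul_add_edges [CompleteSpace E] {k : ℝ} (hk : k < π)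
    (hf : DiffContOnCl ℂ f (Complex.re ⁻¹' Ioo (-1 / 2) (1 / 2)))
    (hO : f =O[stripEnds (-1 / 2) (1 / 2)] fun z => Real.exp (k * |z.im|)) :
    ∫ t : ℝ, sech (π * t) • (f ((1 / 2 : ℝ) + t * I) + f ((-1 / 2 : ℝ) + t * I)) =
      (2 : ℝ) • f 0 := by
  have h_edge {s : ℝ} (hs : s ∈ Icc (-1 / 2) (1 / 2)) :=
    integrable_sech_pi_mul_smul_vertical (by norm_num) hs hf hk hO
  have h_right := h_edge (s := 1 / 2) (by norm_num)
  have h_left := h_edge (s := -1 / 2) (by norm_num)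
  have h_const := integrable_sech_pi_mul.smul_const (f 0)
  have h_shift := integral_vertical_eq_of_tendsto_stripEnds (by norm_num)
    (diffContOnCl_sinQuotient hf) (tendsto_sinQuotient_stripEnds hk hO)
    (by simpa only [sinQuotient_neg_half_add_mul_I, smul_sub] using! (h_left.sub h_const).neg)
    (by simpa only [sinQuotient_half_add_mul_I, smul_sub] using! h_right.sub h_const)
  simp only [sinQuotient_half_add_mul_I, sinQuotient_neg_half_add_mul_I, integral_neg,
    integral_sech_pi_mul_smul_sub _ h_right, integral_sech_pi_mul_smul_sub _ h_left,
    neg_sub, sub_eq_sub_iff_add_eq_add] at h_shift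
  simp only [smul_add]
  rw [integral_add h_right h_left, ← h_shift, two_smul]

end MeanValue

section PolynomialGrowth

open Polynomial

theorem isBigO_eval_exp_norm {𝕜 : Type*} [NormedField 𝕜] (p : 𝕜[X]) (l : Filter 𝕜) :
    (fun z => p.eval z) =O[l] fun z => Real.exp ‖z‖ := by
  simp only [eval_eq_sum_range]
  refine IsBigO.fun_sum fun k _ => IsBigO.const_mul_left (.of_bound k.factorial ?_) _
  refine .of_forall fun z => ?_
  rw [norm_pow, Real.norm_of_nonneg (Real.exp_pos _).le, ← div_le_iff₀' (by positivity)]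
  exact Real.pow_div_factorial_le_exp _ (norm_nonneg z) k

theorem isBigO_eval_exp_abs_im (p : ℂ[X]) (a b : ℝ) :
    (fun z => p.eval z) =O[stripEnds a b] fun z => Real.exp |z.im| := by
  refine (isBigO_eval_exp_norm p _).trans (.of_bound (Real.exp (max |a| |b|)) ?_)
  filter_upwards [mem_inf_of_right (mem_principal_self _)] with z hz
  rw [Real.norm_of_nonneg (Real.exp_pos _).le, Real.norm_of_nonneg (Real.exp_pos _).le,
    ← Real.exp_add]
  gcongr
  exact (Complex.norm_le_abs_re_add_abs_im z).trans (by gcongr; exact abs_le_max_abs_abs hz.1 hz.2)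

theorem integrable_sech_pi_mul_smul_eval (p : ℂ[X]) :
    Integrable fun t : ℝ => sech (π * t) • p.eval (t : ℂ) := by
  have h_pi : 1 < |π| := (by linarith [Real.two_le_pi] : 1 < π).trans_le (le_abs_self π)
  refine integrable_sech_mul_smul h_pi (by fun_prop) ?_
  simpa only [Function.comp_def, Complex.norm_real, Real.norm_eq_abs, one_mul] using
    (isBigO_eval_exp_norm p ⊤).comp_tendsto (tendsto_top (f := fun t : ℝ => (t : ℂ)))

theorem integral_sech_pi_mul_smul_eval_add (p : ℂ[X]) (c : ℂ) :
    ∫ t : ℝ, sech (π * t) • (p.eval (c + I * t - 1 / 2 + 1) + p.eval (c + I * t - 1 / 2)) =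
      2 * p.eval c := by
  have h_mean := integral_sech_pi_mul_smul_add_edges (f := fun z => (p.comp (X + C c)).eval z)
    (k := 1) (by linarith [Real.two_le_pi]) (Polynomial.differentiable _).diffContOnCl
    (by simpa only [one_mul] using isBigO_eval_exp_abs_im (p.comp (X + C c)) _ _)
  simp only [eval_comp, eval_add, eval_X, eval_C, zero_add] at h_mean
  rw [Complex.real_smul, Complex.ofReal_ofNat] at h_mean
  rw [← h_mean]
  congr! 5 <;> push_cast <;> ring

end PolynomialGrowth

section EulerPolynomial

open Polynomial

/-- The `n`-th Euler polynomial as an element of `ℚ[X]`, so that it can be evaluated at complex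
numbers. -/
noncomputable def eulerPolynomial (n : ℕ) : ℚ[X] :=
  C (2 ^ (n + 1) / (n + 1) : ℚ) *
    ((Polynomial.bernoulli (n + 1)).comp (C (1 / 2) * (X + 1)) -
      (Polynomial.bernoulli (n + 1)).comp (C (1 / 2) * X))

theorem aeval_eulerPolynomial {A : Type*} [Field A] [Algebra ℚ A] (n : ℕ) (a : A) :
    aeval a (eulerPolynomial n) = 2 ^ (n + 1) / (n + 1) *
      (aeval ((a + 1) / 2) (Polynomial.bernoulli (n + 1)) -
        aeval (a / 2) (Polynomial.bernoulli (n + 1))) := by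
  have : CharZero A := algebraRat.charZero A
  simp [eulerPolynomial, aeval_comp, div_eq_inv_mul]

theorem aeval_one_add_bernoulli {A : Type*} [CommRing A] [Algebra ℚ A] (n : ℕ) (a : A) :
    aeval (1 + a) (Polynomial.bernoulli n) =
      aeval a (Polynomial.bernoulli n) + n * a ^ (n - 1) := by
  simpa [aeval_comp] using congrArg (aeval a) (bernoulli_comp_one_add_X n)

theorem aeval_add_one_eulerPolynomial_add {A : Type*} [Field A] [Algebra ℚ A] (n : ℕ) (a : A) :
    aeval (a + 1) (eulerPolynomial n) + aeval a (eulerPolynomial n) = 2 * a ^ n := by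
  have : CharZero A := algebraRat.charZero A
  have h_succ : (n + 1 : A) ≠ 0 := n.cast_add_one_ne_zero
  rw [aeval_eulerPolynomial, aeval_eulerPolynomial, show (a + 1 + 1) / 2 = 1 + a / 2 by ring,
    aeval_one_add_bernoulli, Nat.cast_add_one, Nat.add_sub_cancel, div_pow]
  field_simp
  ring

theorem ofReal_eulerPoly (n : ℕ) (x : ℝ) :
    (eulerPoly n x : ℂ) = aeval (x : ℂ) (eulerPolynomial n) := by
  rw [eulerPoly, bernoulliPoly, bernoulliPoly, ← aeval_eulerPolynomial]
  exact (aeval_algebraMap_apply ℂ x _).symm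

end EulerPolynomial

theorem eulerPoly_eq_moment_general (n : ℕ) (x : ℂ) :
    Integrable (fun t : ℝ => (x + I * t - 1 / 2) ^ n * (sech (π * t) : ℂ)) ∧
    Polynomial.aeval x (eulerPolynomial n) =
      ∫ t : ℝ, (x + I * t - 1 / 2) ^ n * (sech (π * t) : ℂ) := by
  constructor
  · have h_poly := integrable_sech_pi_mul_smul_eval
      ((.C (x - 1 / 2) + .C I * .X) ^ n)
    refine h_poly.congr (ae_of_all _ fun t => ?_)
    simp only [Polynomial.eval_pow, Polynomial.eval_add, Polynomial.eval_mul, Polynomial.eval_C,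
      Polynomial.eval_X, Complex.real_smul]
    ring
  · have h_mean := integral_sech_pi_mul_smul_eval_add
      ((eulerPolynomial n).map (algebraMap ℚ ℂ)) x
    simp only [Polynomial.eval_map_algebraMap, aeval_add_one_eulerPolynomial_add,
      Complex.real_smul, mul_left_comm _ (2 : ℂ), integral_const_mul] at h_mean
    rw [← mul_left_cancel₀ two_ne_zero h_mean]
    simp only [mul_comm]

/-- The Euler polynomials as moments: for all `n : ℕ` and `x : ℝ`,
`Eₙ(x) = ∫ (x + it − 1/2)ⁿ sech(πt) dt`, the integral being convergent. -/
theorem eulerPoly_eq_moment (n : ℕ) (x : ℝ) :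
    Integrable (fun t : ℝ =>
      ((x : ℂ) + Complex.I * t - 1 / 2) ^ n * ((sech (Real.pi * t) : ℝ) : ℂ)) ∧
    (eulerPoly n x : ℂ) =
      ∫ t : ℝ, ((x : ℂ) + Complex.I * t - 1 / 2) ^ n * ((sech (Real.pi * t) : ℝ) : ℂ) := by
  rw [ofReal_eulerPoly]
  exact eulerPoly_eq_moment_general n x
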